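/- Every exact potential game in which the player set is a finite type and every strategy set is a nonempty finite type possesses a pure Nash equilibrium. -/

import Mathlib

section PotentialGame

variable {ι : Type*} [DecidableEq ι] {S : ι → Type*}

/-- The profile `s` is a pure Nash equilibrium of the game with payoffs `θ`: no player gains by a
unilateral change of strategy. Each player's payoffs may lie in an order of their own. -/
def IsPureNashEquilibrium {α : ι → Type*} [∀ i, LE (α i)]
    (θ : ∀ i, (∀ j, S j) → α i) (s : ∀ j, S j) : Prop :=
  ∀ (i : ι) (x : S i), θ i (Function.update s i x) ≤ θ i s

/-- `P` is an exact potential of the game with payoffs `θ`: a unilateral deviation changes the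
deviator's payoff and the potential by the same amount. -/
def IsExactPotential {G : Type*} [Sub G] (θ : ι → (∀ j, S j) → G) (P : (∀ j, S j) → G) : Prop :=
  ∀ (i : ι) (s : ∀ j, S j) (x : S i),
    θ i (Function.update s i x) - θ i s = P (Function.update s i x) - P s

/-- `P` is a generalized ordinal potential (Monderer–Shapley) of the game with payoffs `θ`: every
profitable unilateral deviation increases the potential. Unlike for an ordinal potential, the
converse implication is not required. -/
def IsGeneralizedOrdinalPotential {α : ι → Type*} [∀ i, LT (α i)] {β : Type*} [LT β]
    (θ : ∀ i, (∀ j, S j) → α i) (P : (∀ j, S j) → β) : Prop :=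
  ∀ (i : ι) (s : ∀ j, S j) (x : S i),
    θ i s < θ i (Function.update s i x) → P s < P (Function.update s i x)

theorem IsExactPotential.isGeneralizedOrdinalPotential {G : Type*} [AddGroup G] [LT G]
    [AddRightStrictMono G] {θ : ι → (∀ j, S j) → G} {P : (∀ j, S j) → G}
    (hP : IsExactPotential θ P) : IsGeneralizedOrdinalPotential θ P := fun i s x hlt => by
  rwa [← sub_pos, ← hP i s x, sub_pos]

theorem IsGeneralizedOrdinalPotential.isPureNashEquilibrium_of_forall_not_lt {α : ι → Type*}
    [∀ i, LinearOrder (α i)] {β : Type*} [LT β] {θ : ∀ i, (∀ j, S j) → α i} {P : (∀ j, S j) → β}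
    (hP : IsGeneralizedOrdinalPotential θ P) {s : ∀ j, S j}
    (hs : ∀ (i : ι) (x : S i), ¬ P s < P (Function.update s i x)) :
    IsPureNashEquilibrium θ s :=
  fun i x => not_lt.mp fun hlt => hs i x (hP i s x hlt)

theorem stmt_5_general [∀ i, Nonempty (S i)] {α : ι → Type*} [∀ i, LinearOrder (α i)]
    {β : Type*} [LT β] {θ : ∀ i, (∀ j, S j) → α i} {P : (∀ j, S j) → β}
    (hP : IsGeneralizedOrdinalPotential θ P) (hwf : (Set.range P).WellFoundedOn (· > ·)) :
    ∃ s, IsPureNashEquilibrium θ s := by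
  obtain ⟨s, -, hmax⟩ := (Set.wellFoundedOn_range.mp hwf).has_min Set.univ Set.univ_nonempty
  exact ⟨s, hP.isPureNashEquilibrium_of_forall_not_lt fun _ _ => hmax _ (Set.mem_univ _)⟩

end PotentialGame

/-- Every exact potential game with finitely many players and nonempty finite
strategy sets possesses a pure Nash equilibrium. -/
theorem stmt_5 {ι : Type*} [Fintype ι] [DecidableEq ι] {S : ι → Type*}
    [∀ i, Fintype (S i)] [∀ i, Nonempty (S i)]
    (θ : ι → (∀ j, S j) → ℝ) (P : (∀ j, S j) → ℝ)
    (hpot : ∀ (i : ι) (s : ∀ j, S j) (x : S i),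
      θ i (Function.update s i x) - θ i s = P (Function.update s i x) - P s) :
    ∃ s : ∀ j, S j, ∀ (i : ι) (x : S i),
      θ i (Function.update s i x) ≤ θ i s :=
  stmt_5_general (IsExactPotential.isGeneralizedOrdinalPotential hpot)
    (Set.finite_range P).wellFoundedOn
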